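/- For every ψ ∈ 𝒜(I_π) it holds λ₁(I_π, 2ψ') ≥ 4. In particular, equality occurs when ψ(x) = tan x, in which case an eigenfunction is cos²x. -/

import Mathlib

open MeasureTheory Real Set Filter
open scoped ENNReal

noncomputable section

/-- Test class for the Dirichlet eigenvalue with measure potential on `(a,b)`:
`C¹` functions vanishing outside the open interval (a core of `H¹₀`). -/
def TestFun (a b : ℝ) (v : ℝ → ℝ) : Prop :=
  ContDiff ℝ 1 v ∧ ∀ x ∉ Ioo a b, v x = 0

/-- Rayleigh quotient for the Dirichlet eigenvalue with (nonnegative, possibly infinite)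
measure potential `q` on the interval `(a,b)`. -/
def dirRQ (a b : ℝ) (q : Measure ℝ) (v : ℝ → ℝ) : ℝ≥0∞ :=
  ((∫⁻ x in Ioo a b, ENNReal.ofReal ((deriv v x) ^ 2)) +
      ∫⁻ x in Ioo a b, ENNReal.ofReal ((v x) ^ 2) ∂q) /
    ∫⁻ x in Ioo a b, ENNReal.ofReal ((v x) ^ 2)

/-- `λ₁((a,b), q)`, the first Dirichlet eigenvalue with measure potential `q`. -/
def lam1 (a b : ℝ) (q : Measure ℝ) : ℝ≥0∞ :=
  ⨅ (v : ℝ → ℝ)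
    (_ : TestFun a b v ∧ (∫⁻ x in Ioo a b, ENNReal.ofReal ((v x) ^ 2)) ≠ 0),
    dirRQ a b q v

/-- The class `𝒜(I_π)`: an increasing function `psi` with finiteness domain `dom ⊆ I_π`
(an interval), satisfying the improved-monotonicity gap condition, together with the
measure `nu` representing its distributional derivative `ψ'` on `dom`. -/
structure PsiA where
  dom : Set ℝ
  domSub : dom ⊆ Ioo (-(π / 2)) (π / 2)
  domConn : dom.OrdConnected
  psi : ℝ → ℝ
  mono : MonotoneOn psi dom
  gap : ∀ ⦃x⦄, x ∈ dom → ∀ ⦃y⦄, y ∈ dom → x < y →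
    2 * tan ((y - x) / 2) ≤ psi y - psi x
  nu : Measure ℝ
  nu_eq : ∀ ⦃x⦄, x ∈ dom → ∀ ⦃y⦄, y ∈ dom → x ≤ y →
    nu (Ioc x y) = ENNReal.ofReal (psi y - psi x)

/-- The measure `ψ'`, extended by `+∞` on `I_π \ dom ψ`. -/
def PsiA.derivM (P : PsiA) : Measure ℝ :=
  P.nu.restrict P.dom + (∞ : ℝ≥0∞) • volume.restrict (Ioo (-(π / 2)) (π / 2) \ P.dom)

/-- The measure `ψ² dx`, extended by `+∞` on `I_π \ dom ψ`. -/
def PsiA.sqM (P : PsiA) : Measure ℝ :=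
  (volume.restrict P.dom).withDensity (fun x => ENNReal.ofReal ((P.psi x) ^ 2)) +
    (∞ : ℝ≥0∞) • volume.restrict (Ioo (-(π / 2)) (π / 2) \ P.dom)

/-- The measure `q = ψ' + ψ²`, extended by `+∞` on `I_π \ dom ψ`. -/
def PsiA.qM (P : PsiA) : Measure ℝ :=
  P.nu.restrict P.dom +
    (volume.restrict P.dom).withDensity (fun x => ENNReal.ofReal ((P.psi x) ^ 2)) +
    (∞ : ℝ≥0∞) • volume.restrict (Ioo (-(π / 2)) (π / 2) \ P.dom)

/-- The function `cos² x` on `I_π`, extended by zero. -/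
def cosSq : ℝ → ℝ := fun x => if x ∈ Ioo (-(π / 2)) (π / 2) then cos x ^ 2 else 0

/-- The measure with density `1 + 2 tan² x` on `I_π`. -/
def tanWeight : Measure ℝ :=
  (volume.restrict (Ioo (-(π / 2)) (π / 2))).withDensity
    fun x => ENNReal.ofReal (1 + 2 * tan x ^ 2)

/-!
Let `v` be a test function of finite energy and `u = |v|`, so that `{u > 0} ⊆ dom ψ` and every
interval of length `l < π` in `{u > 0}` has `ψ'`-mass at least `2 tan (l / 2)`. Say that the
estimate holds at the level `s` if, on every interval `J` of length `< π` with `u ≤ s` at its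
endpoints, `4 max(s, u) ^ 2` integrates to at most the energy of `u` above `s` plus
`8 s ^ 2 tan (|J| / 2)`. The estimate descends from `s'` to `s < s'`. Applied to a component of
`J ∩ {u > s'}` of length `l`, it loses `8 s' ^ 2 tan (l / 2)`, of which the potential mass between
the two levels pays `4 (s' ^ 2 - s ^ 2) tan (l / 2)`. As `tan` is convex with `tan 0 = 0`, the rests
sum to at most `4 (s' ^ 2 + s ^ 2) T` with `T = tan (L / 2)`, `L` being the total length of the
components. Since `u` crosses from `s` to `s'` and back, Young's inequality with parameter
`2 s T` lets the gradient between the levels pay `4 (s' ^ 2 - s ^ 2) T`, up to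
`4 s ^ 2 T ^ 2 (|J| - L)`, and by convexity at `L / 2`
`8 s ^ 2 T + 4 s ^ 2 (1 + T ^ 2) (|J| - L) ≤ 8 s ^ 2 tan (|J| / 2)`. This last use of Young's
inequality is exact only after rescaling the levels, which is harmless for a geometric sequence of
levels whose ratio tends to `1`. Descending from `max u` to `s → 0` on an interval approaching
`I_π`, where `u = O(s)` outside controls `s ^ 2 tan (|J| / 2)`,
yields `4 ∫ v ^ 2 ≤ ∫ v' ^ 2 + 2 ∫ v ^ 2 dψ'`.
-/

section TanConvexity

lemma convexOn_tan : ConvexOn ℝ (Ico 0 (π / 2)) tan := by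
  have hcos : ∀ x ∈ Ico 0 (π / 2), 0 < cos x := fun x hx =>
    cos_pos_of_mem_Ioo ⟨by linarith [hx.1, hx.2], hx.2⟩
  have hderiv : ∀ x ∈ Ico 0 (π / 2), HasDerivAt tan (1 / cos x ^ 2) x := fun x hx =>
    hasDerivAt_tan (hcos x hx).ne'
  refine MonotoneOn.convexOn_of_deriv (convex_Ico 0 (π / 2))
    (fun x hx => (hderiv x hx).continuousAt.continuousWithinAt)
    (fun x hx => (hderiv x (interior_subset hx)).differentiableAt.differentiableWithinAt)
    fun x hx y hy hxy => ?_
  rw [(hderiv x (interior_subset hx)).deriv, (hderiv y (interior_subset hy)).deriv]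
  have hy' := interior_subset hy
  have := hcos y hy'
  gcongr
  exact cos_le_cos_of_nonneg_of_le_pi (interior_subset hx).1 (by linarith [hy'.1, hy'.2]) hxy

lemma tan_add_mul_le_tan_add {a h : ℝ} (ha : 0 ≤ a) (hh : 0 ≤ h) (hah : a + h < π / 2) :
    tan a + (1 + tan a ^ 2) * h ≤ tan (a + h) := by
  rcases hh.eq_or_lt with rfl | hh
  · simp
  have hcos : cos a ≠ 0 := (cos_pos_of_mem_Ioo ⟨by linarith, by linarith⟩).ne'
  have hslope := convexOn_tan.le_slope_of_hasDerivAt ⟨ha, by linarith⟩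
    ⟨by linarith, hah⟩ (lt_add_of_pos_right a hh) (hasDerivAt_tan hcos)
  rw [slope_def_field, le_div_iff₀ (by linarith), ← inv_eq_one_div,
    ← inv_one_add_tan_sq hcos, inv_inv] at hslope
  linarith

lemma tan_pi_div_two_sub_le {h : ℝ} (hh : 0 < h) (hπ : h < π / 2) : tan (π / 2 - h) ≤ h⁻¹ := by
  rw [tan_pi_div_two_sub]
  exact inv_anti₀ hh (le_tan hh.le hπ)

lemma two_mul_tan_half_add_le {a b : ℝ} (ha : 0 ≤ a) (hab : a ≤ b) (hb : b < π) :
    2 * tan (a / 2) + (1 + tan (a / 2) ^ 2) * (b - a) ≤ 2 * tan (b / 2) := by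
  have h := tan_add_mul_le_tan_add (a := a / 2) (h := (b - a) / 2) (by linarith) (by linarith)
    (by linarith)
  rw [← add_div, add_sub_cancel] at h
  linarith

lemma measureReal_half_lt_pi_div_two {U : Set ℝ} {x y : ℝ} (hU : U ⊆ Ioo x y) (hL : y - x < π) :
    volume.real U / 2 < π / 2 := by
  have hle := measureReal_mono hU (measure_Ioo_lt_top (μ := volume)).ne
  rw [Real.volume_real_Ioo, le_max_iff] at hle
  rcases hle with hle | hle <;> linarith [pi_pos]

lemma tan_half_measureReal_nonneg {U : Set ℝ} {x y : ℝ} (hU : U ⊆ Ioo x y) (hL : y - x < π) :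
    0 ≤ tan (volume.real U / 2) :=
  tan_nonneg_of_nonneg_of_le_pi_div_two (by positivity) (measureReal_half_lt_pi_div_two hU hL).le

lemma ofReal_tan_half_measureReal_add_le {U : Set ℝ} {x y W : ℝ} (hU : MeasurableSet U)
    (hUxy : U ⊆ Ioo x y) (hxy : x < y) (hL : y - x < π) (hW : 0 ≤ W) :
    ENNReal.ofReal (8 * W * tan (volume.real U / 2)) +
        ENNReal.ofReal (4 * W) * volume (Ioo x y \ U) +
        ENNReal.ofReal (4 * W * tan (volume.real U / 2) ^ 2) * volume (Ioo x y \ U) ≤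
      ENNReal.ofReal (8 * W * tan ((y - x) / 2)) := by
  set T := tan (volume.real U / 2)
  set V := volume.real (Ioo x y \ U) with hV
  have hvol : volume.real U + V = y - x := by
    rw [hV, measureReal_sdiff hUxy hU measure_Ioo_lt_top.ne,
      Real.volume_real_Ioo_of_le hxy.le, add_sub_cancel]
  have hV0 : 0 ≤ V := measureReal_nonneg
  have hT : 0 ≤ T := tan_half_measureReal_nonneg hUxy hL
  rw [← ofReal_measureReal (measure_ne_top_of_subset sdiff_subset measure_Ioo_lt_top.ne), ← hV,
    ← ENNReal.ofReal_mul (by positivity), ← ENNReal.ofReal_mul (by positivity),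
    ← ENNReal.ofReal_add (by positivity) (by positivity),
    ← ENNReal.ofReal_add (by positivity) (by positivity)]
  refine ENNReal.ofReal_le_ofReal ?_
  have htan : 2 * T + (1 + T ^ 2) * V ≤ 2 * tan ((y - x) / 2) := by
    rw [← sub_eq_of_eq_add' hvol.symm]
    exact two_mul_tan_half_add_le measureReal_nonneg (by linarith) hL
  linarith [mul_le_mul_of_nonneg_left htan (by positivity : 0 ≤ 4 * W)]

lemma tan_le_mul_tan_div {l L : ℝ} (hl : 0 ≤ l) (hlL : l ≤ L) (hL : L < π / 2) :
    tan l ≤ l * (tan L / L) := by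
  rcases hl.eq_or_lt with rfl | hl
  · simp
  have hL0 : 0 < L := hl.trans_le hlL
  have hchord := convexOn_tan.2 (x := 0) ⟨le_rfl, by linarith⟩ (y := L) ⟨hL0.le, hL⟩
    (sub_nonneg.2 ((div_le_one hL0).2 hlL)) (div_nonneg hl.le hL0.le) (by ring)
  simp only [smul_eq_mul, mul_zero, zero_add, tan_zero, div_mul_cancel₀ l hL0.ne'] at hchord
  exact hchord.trans_eq (by ring)

lemma tsum_ofReal_tan_le_ofReal_tan {ι : Type*} {l : ι → ℝ} {L : ℝ} (hl : ∀ i, 0 ≤ l i)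
    (hL : 0 ≤ L) (hLπ : L < π / 2) (hsum : ∑' i, ENNReal.ofReal (l i) ≤ ENNReal.ofReal L) :
    ∑' i, ENNReal.ofReal (tan (l i)) ≤ ENNReal.ofReal (tan L) := by
  have hle : ∀ i, l i ≤ L := fun i =>
    (ENNReal.ofReal_le_ofReal_iff hL).1 ((ENNReal.le_tsum i).trans hsum)
  calc ∑' i, ENNReal.ofReal (tan (l i))
      ≤ ∑' i, ENNReal.ofReal (l i) * ENNReal.ofReal (tan L / L) :=
        ENNReal.tsum_le_tsum fun i => by
          rw [← ENNReal.ofReal_mul (hl i)]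
          exact ENNReal.ofReal_le_ofReal (tan_le_mul_tan_div (hl i) (hle i) hLπ)
    _ ≤ ENNReal.ofReal L * ENNReal.ofReal (tan L / L) := by
        rw [ENNReal.tsum_mul_right]
        gcongr
    _ = ENNReal.ofReal (tan L) := by
        rw [← ENNReal.ofReal_mul hL]
        rcases eq_or_ne L 0 with rfl | hL0
        · simp
        · rw [mul_div_cancel₀ _ hL0]

end TanConvexity

section ComponentIntervals

/-- The maximal open intervals contained in `U ⊆ ℝ` (the bounded connected components of `U` when
`U` is open), encoded by their pairs of endpoints. -/
def componentIntervals (U : Set ℝ) : Set (ℝ × ℝ) :=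
  {c | c.1 < c.2 ∧ Ioo c.1 c.2 ⊆ U ∧ c.1 ∉ U ∧ c.2 ∉ U}

lemma pairwiseDisjoint_componentIntervals (U : Set ℝ) :
    (componentIntervals U).PairwiseDisjoint fun c => Ioo c.1 c.2 := by
  rintro ⟨p, q⟩ ⟨-, hsub, hp, hq⟩ ⟨p', q'⟩ ⟨-, hsub', hp', hq'⟩ hne
  rw [Function.onFun, Set.disjoint_left]
  rintro t ⟨hpt, htq⟩ ⟨hpt', htq'⟩
  have hpp : p = p' := le_antisymm
    (not_lt.1 fun h => hp (hsub' ⟨h, hpt.trans htq'⟩))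
    (not_lt.1 fun h => hp' (hsub ⟨h, hpt'.trans htq⟩))
  have hqq : q = q' := le_antisymm
    (not_lt.1 fun h => hq' (hsub ⟨hpt.trans htq', h⟩))
    (not_lt.1 fun h => hq (hsub' ⟨hpt'.trans htq, h⟩))
  exact hne (Prod.ext hpp hqq)

lemma countable_componentIntervals (U : Set ℝ) : (componentIntervals U).Countable :=
  (pairwiseDisjoint_componentIntervals U).countable_of_isOpen (fun _ _ => isOpen_Ioo)
    fun _ hc => nonempty_Ioo.2 hc.1

lemma iUnion_componentIntervals {U : Set ℝ} {x y : ℝ} (hU : IsOpen U) (hxy : U ⊆ Ioo x y) :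
    ⋃ c : componentIntervals U, Ioo c.1.1 c.1.2 = U := by
  refine subset_antisymm (iUnion_subset fun c => c.2.2.1) fun z hz => ?_
  have hxU : x ∉ U := fun h => (hxy h).1.false
  have hyU : y ∉ U := fun h => (hxy h).2.false
  obtain ⟨p, ⟨⟨hxp, hpz⟩, hpU⟩, hp⟩ := (isCompact_Icc.inter_right hU.isClosed_compl
    |>.exists_isGreatest ⟨x, left_mem_Icc.2 (hxy hz).1.le, hxU⟩ : ∃ p, IsGreatest (Icc x z ∩ Uᶜ) p)
  obtain ⟨q, ⟨⟨hzq, hqy⟩, hqU⟩, hq⟩ := (isCompact_Icc.inter_right hU.isClosed_compl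
    |>.exists_isLeast ⟨y, right_mem_Icc.2 (hxy hz).2.le, hyU⟩ : ∃ q, IsLeast (Icc z y ∩ Uᶜ) q)
  have hpz' : p < z := hpz.lt_of_ne fun h => hpU (h ▸ hz)
  have hzq' : z < q := hzq.lt_of_ne fun h => hqU (h ▸ hz)
  have hsub : Ioo p q ⊆ U := fun t ht => by
    by_contra htU
    rcases le_total t z with htz | hzt
    · exact ht.1.not_ge (hp ⟨⟨hxp.trans ht.1.le, htz⟩, htU⟩)
    · exact ht.2.not_ge (hq ⟨⟨hzt, ht.2.le.trans hqy⟩, htU⟩)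
  exact mem_iUnion.2 ⟨⟨(p, q), hpz'.trans hzq', hsub, hpU, hqU⟩, hpz', hzq'⟩

lemma tsum_ofReal_tan_componentIntervals_le {U : Set ℝ} {x y : ℝ} (hU : IsOpen U)
    (hxy : U ⊆ Ioo x y) (hL : y - x < π) :
    ∑' c : componentIntervals U, ENNReal.ofReal (tan ((c.1.2 - c.1.1) / 2)) ≤
      ENNReal.ofReal (tan (volume.real U / 2)) := by
  have : Countable (componentIntervals U) := (countable_componentIntervals U).to_subtype
  have hfin : volume U ≠ ∞ := measure_ne_top_of_subset hxy measure_Ioo_lt_top.ne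
  have hvol : volume U = ∑' c : componentIntervals U, ENNReal.ofReal (c.1.2 - c.1.1) := by
    conv_lhs => rw [← iUnion_componentIntervals hU hxy]
    rw [measure_iUnion (pairwiseDisjoint_componentIntervals U).subtype fun _ => measurableSet_Ioo]
    simp only [Real.volume_Ioo]
  refine tsum_ofReal_tan_le_ofReal_tan (fun c => by linarith [c.2.1]) (by positivity)
    (measureReal_half_lt_pi_div_two hxy hL) ?_
  simp_rw [ENNReal.ofReal_div_of_pos zero_lt_two, ofReal_measureReal hfin, hvol, div_eq_mul_inv]
  exact ENNReal.tsum_mul_right.le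

end ComponentIntervals

section UpperGradient

/-- `g` is an upper gradient of `u`: it bounds the variation of `u` over every interval. For a `C¹`
function `v`, the function `‖v'‖` is an upper gradient of `v` and also of `|v|`. -/
def IsUpperGradient (u : ℝ → ℝ) (g : ℝ → ℝ≥0∞) : Prop :=
  ∀ ⦃p q⦄, p ≤ q → ‖u q - u p‖ₑ ≤ ∫⁻ t in Icc p q, g t

lemma isUpperGradient_abs {v : ℝ → ℝ} (hv : ContDiff ℝ 1 v) :
    IsUpperGradient (fun t => |v t|) fun t => ‖deriv v t‖ₑ := fun p q hpq => by
  refine le_trans ?_ (enorm_sub_le_lintegral_deriv_of_contDiffOn_Icc hv.contDiffOn hpq)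
  rw [enorm_le_iff_norm_le, Real.norm_eq_abs, Real.norm_eq_abs]
  exact abs_abs_sub_abs_le (v q) (v p)

lemma exists_Ioo_crossing {u : ℝ → ℝ} (hu : Continuous u) {x z s s' : ℝ} (hxz : x < z)
    (hss : s < s') (hx : u x ≤ s) (hz : s' ≤ u z) :
    ∃ p q, p < q ∧ u p ≤ s ∧ s' ≤ u q ∧ Ioo p q ⊆ Ioo x z ∩ u ⁻¹' Ioo s s' := by
  obtain ⟨p, ⟨⟨hxp, hpz⟩, hups : u p ≤ s⟩, hp⟩ :=
    (isCompact_Icc.inter_right (isClosed_Iic.preimage hu)).exists_isGreatest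
      ⟨x, left_mem_Icc.2 hxz.le, hx⟩
  obtain ⟨q, ⟨⟨hpq, hqz⟩, hsuq : s' ≤ u q⟩, hq⟩ :=
    (isCompact_Icc.inter_right (isClosed_Ici.preimage hu)).exists_isLeast
      ⟨z, right_mem_Icc.2 hpz, hz⟩
  have hpq' : p < q := hpq.lt_of_ne fun h => (hups.trans_lt hss).not_ge (h ▸ hsuq)
  refine ⟨p, q, hpq', hups, hsuq, fun t ht =>
    ⟨⟨hxp.trans_lt ht.1, ht.2.trans_le hqz⟩, ?_, ?_⟩⟩
  · exact not_le.1 fun h => ht.1.not_ge (hp ⟨⟨hxp.trans ht.1.le, ht.2.le.trans hqz⟩, h⟩)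
  · exact not_le.1 fun h => ht.2.not_ge (hq ⟨⟨ht.1.le, ht.2.le.trans hqz⟩, h⟩)

lemma exists_Ioo_crossing_desc {u : ℝ → ℝ} (hu : Continuous u) {z y s s' : ℝ} (hzy : z < y)
    (hss : s < s') (hz : s' ≤ u z) (hy : u y ≤ s) :
    ∃ p q, p < q ∧ s' ≤ u p ∧ u q ≤ s ∧ Ioo p q ⊆ Ioo z y ∩ u ⁻¹' Ioo s s' := by
  obtain ⟨p, q, hpq, hp, hq, hsub⟩ := exists_Ioo_crossing (u := fun t => u (-t)) (by fun_prop)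
    (neg_lt_neg hzy) hss (by simpa using hy) (by simpa using hz)
  refine ⟨-q, -p, neg_lt_neg hpq, hq, hp, fun t ht => ?_⟩
  obtain ⟨⟨hyt, htz⟩, hut⟩ := hsub (a := -t) ⟨lt_neg_of_lt_neg ht.2, neg_lt_of_neg_lt ht.1⟩
  exact ⟨⟨neg_lt_neg_iff.1 htz, neg_lt_neg_iff.1 hyt⟩, by simpa using hut⟩

variable {u : ℝ → ℝ} {g : ℝ → ℝ≥0∞}

lemma IsUpperGradient.ofReal_sub_le_lintegral_Ioo (hg : IsUpperGradient u g) {p q : ℝ}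
    (hpq : p ≤ q) : ENNReal.ofReal |u q - u p| ≤ ∫⁻ t in Ioo p q, g t := by
  rw [← Real.norm_eq_abs, ofReal_norm, restrict_Ioo_eq_restrict_Icc]
  exact hg hpq

lemma IsUpperGradient.two_mul_ofReal_sub_le (hg : IsUpperGradient u g) (hu : Continuous u)
    {x y z s s' : ℝ} (hz : z ∈ Ioo x y) (hss : s < s') (hx : u x ≤ s) (hy : u y ≤ s)
    (huz : s' ≤ u z) :
    2 * ENNReal.ofReal (s' - s) ≤ ∫⁻ t in Ioo x y ∩ u ⁻¹' Ioc s s', g t := by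
  obtain ⟨p, q, hpq, hup, huq, hsub⟩ := exists_Ioo_crossing hu hz.1 hss hx huz
  obtain ⟨p', q', hpq', hup', huq', hsub'⟩ := exists_Ioo_crossing_desc hu hz.2 hss huz hy
  have hdisj : Disjoint (Ioo p q) (Ioo p' q') :=
    Set.disjoint_left.2 fun t ht ht' => (hsub ht).1.2.not_gt (hsub' ht').1.1
  have hunion : Ioo p q ∪ Ioo p' q' ⊆ Ioo x y ∩ u ⁻¹' Ioc s s' := union_subset
    (hsub.trans (inter_subset_inter (Ioo_subset_Ioo le_rfl hz.2.le)
      (preimage_mono Ioo_subset_Ioc_self)))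
    (hsub'.trans (inter_subset_inter (Ioo_subset_Ioo hz.1.le le_rfl)
      (preimage_mono Ioo_subset_Ioc_self)))
  calc 2 * ENNReal.ofReal (s' - s)
      ≤ (∫⁻ t in Ioo p q, g t) + ∫⁻ t in Ioo p' q', g t := by
        rw [two_mul]
        gcongr
        · refine (ENNReal.ofReal_le_ofReal ?_).trans (hg.ofReal_sub_le_lintegral_Ioo hpq.le)
          exact (by linarith : s' - s ≤ u q - u p).trans (le_abs_self _)
        · refine (ENNReal.ofReal_le_ofReal ?_).trans (hg.ofReal_sub_le_lintegral_Ioo hpq'.le)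
          exact (by linarith : s' - s ≤ -(u q' - u p')).trans (neg_le_abs _)
    _ = ∫⁻ t in Ioo p q ∪ Ioo p' q', g t := (lintegral_union measurableSet_Ioo hdisj).symm
    _ ≤ ∫⁻ t in Ioo x y ∩ u ⁻¹' Ioc s s', g t := lintegral_mono_set hunion

lemma two_mul_mul_le_sq_add_sq (a b : ℝ≥0∞) : 2 * a * b ≤ a ^ 2 + b ^ 2 := by
  rcases eq_or_ne a ∞ with rfl | ha
  · simp
  rcases eq_or_ne b ∞ with rfl | hb
  · simp
  lift a to NNReal using ha
  lift b to NNReal using hb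
  exact_mod_cast two_mul_le_add_sq a b

lemma IsUpperGradient.four_mul_ofReal_sub_le_energy (hg : IsUpperGradient u g) (hu : Continuous u)
    {x y z s s' : ℝ} (hz : z ∈ Ioo x y) (hss : s < s') (hx : u x ≤ s) (hy : u y ≤ s)
    (huz : s' ≤ u z) (κ : ℝ≥0∞) :
    4 * κ * ENNReal.ofReal (s' - s) ≤ (∫⁻ t in Ioo x y ∩ u ⁻¹' Ioc s s', g t ^ 2) +
      κ ^ 2 * volume (Ioo x y ∩ u ⁻¹' Ioc s s') := by
  set S := Ioo x y ∩ u ⁻¹' Ioc s s'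
  calc 4 * κ * ENNReal.ofReal (s' - s) = 2 * κ * (2 * ENNReal.ofReal (s' - s)) := by ring
    _ ≤ 2 * κ * ∫⁻ t in S, g t := by
        gcongr
        exact hg.two_mul_ofReal_sub_le hu hz hss hx hy huz
    _ ≤ ∫⁻ t in S, 2 * κ * g t := lintegral_const_mul_le _ _
    _ ≤ ∫⁻ t in S, (g t ^ 2 + κ ^ 2) := lintegral_mono fun t =>
        (two_mul_mul_le_sq_add_sq κ (g t)).trans_eq (add_comm _ _)
    _ = (∫⁻ t in S, g t ^ 2) + κ ^ 2 * volume S := by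
        rw [lintegral_add_right _ measurable_const, setLIntegral_const]

end UpperGradient

section LevelSets

/-- The gap condition on a measure `ν`, restricted to the intervals contained in `A`: every such
interval of length `l < π` has mass at least `2 tan (l / 2)`. -/
def TanGap (ν : Measure ℝ) (A : Set ℝ) : Prop :=
  ∀ ⦃p q⦄, p < q → q - p < π → Ioo p q ⊆ A → ENNReal.ofReal (2 * tan ((q - p) / 2)) ≤ ν (Ioo p q)

/-- The height assigned to the level `s` in the geometric sequence of levels of ratio `ρ`. The
factor makes `levelHeight ρ (ρ * s) ^ 2 - levelHeight ρ s ^ 2` equal to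
`2 * levelHeight ρ s * (ρ * s - s)`, so that the passage from one level to the next is lossless. -/
def levelHeight (ρ s : ℝ) : ℝ := 2 / (1 + ρ) * s

/-- A minorant of `4 u ^ 2` above the level `s`, constant on the set where `u` is below the next
level `ρ * s`. -/
def levelWeight (u : ℝ → ℝ) (ρ s t : ℝ) : ℝ≥0∞ :=
  ENNReal.ofReal (4 * levelHeight ρ (max s (u t / ρ)) ^ 2)

/-- The energy of `u` over `A` with potential `2ν`, where only the excess of `u ^ 2` over `c`
contributes to the potential term. -/
def excessEnergy (u : ℝ → ℝ) (g : ℝ → ℝ≥0∞) (ν : Measure ℝ) (c : ℝ) (A : Set ℝ) : ℝ≥0∞ :=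
  (∫⁻ t in A, g t ^ 2) + 2 * ∫⁻ t in A, ENNReal.ofReal (u t ^ 2 - c) ∂ν

/-- The eigenvalue estimate above the level `s`: on an interval at whose endpoints `u ≤ s`, the
weight is controlled by the excess energy above `s`, up to the contribution of the level itself. -/
def LevelEstimate (u : ℝ → ℝ) (g : ℝ → ℝ≥0∞) (ν : Measure ℝ) (ρ s : ℝ) : Prop :=
  ∀ ⦃x y⦄, x < y → y - x < π → u x ≤ s → u y ≤ s →
    ∫⁻ t in Ioo x y, levelWeight u ρ s t ≤
      excessEnergy u g ν (levelHeight ρ s ^ 2) (Ioo x y ∩ u ⁻¹' Ioi s) +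
        ENNReal.ofReal (8 * levelHeight ρ s ^ 2 * tan ((y - x) / 2))

variable {u : ℝ → ℝ} {g : ℝ → ℝ≥0∞} {ν : Measure ℝ} {ρ s : ℝ}

lemma levelHeight_nonneg (hρ : 1 < ρ) (hs : 0 < s) : 0 ≤ levelHeight ρ s := by
  unfold levelHeight
  positivity

lemma sq_levelHeight_mul_sub_sq (hρ : 1 < ρ) :
    levelHeight ρ (ρ * s) ^ 2 - levelHeight ρ s ^ 2 = 2 * levelHeight ρ s * (ρ * s - s) := by
  have : 1 + ρ ≠ 0 := by positivity
  unfold levelHeight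
  field_simp
  ring

lemma sq_levelHeight_le_sq_mul (hρ : 1 < ρ) (hs : 0 < s) :
    levelHeight ρ s ^ 2 ≤ levelHeight ρ (ρ * s) ^ 2 := by
  rw [← sub_nonneg, sq_levelHeight_mul_sub_sq hρ]
  have := levelHeight_nonneg hρ hs
  have : s ≤ ρ * s := le_mul_of_one_le_left hs.le hρ.le
  exact mul_nonneg (by positivity) (sub_nonneg.2 this)

lemma levelHeight_le (hρ : 1 < ρ) (hs : 0 < s) : levelHeight ρ s ≤ s :=
  mul_le_of_le_one_left hs.le ((div_le_one (by linarith)).2 (by linarith))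

lemma levelWeight_of_le {t : ℝ} (hρ : 1 < ρ) (h : u t ≤ ρ * s) :
    levelWeight u ρ s t = ENNReal.ofReal (4 * levelHeight ρ s ^ 2) := by
  rw [levelWeight, max_eq_left ((div_le_iff₀' (by positivity)).2 h)]

lemma levelWeight_mono {s' : ℝ} (hρ : 1 < ρ) (hs : 0 < s) (hss : s ≤ s') (t : ℝ) :
    levelWeight u ρ s t ≤ levelWeight u ρ s' t := by
  have : 0 < max s (u t / ρ) := lt_max_of_lt_left hs
  unfold levelWeight levelHeight
  gcongr

lemma lintegral_levelWeight_le_of_le {x y : ℝ} (hρ : 1 < ρ) (hxy : x < y) (hL : y - x < π)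
    (hu : ∀ t ∈ Ioo x y, u t ≤ ρ * s) :
    ∫⁻ t in Ioo x y, levelWeight u ρ s t ≤
      ENNReal.ofReal (8 * levelHeight ρ s ^ 2 * tan ((y - x) / 2)) := by
  rw [setLIntegral_congr_fun measurableSet_Ioo fun t ht => levelWeight_of_le hρ (hu t ht),
    setLIntegral_const, Real.volume_Ioo, ← ENNReal.ofReal_mul (by positivity)]
  have htan := le_tan (x := (y - x) / 2) (by linarith) (by linarith)
  refine ENNReal.ofReal_le_ofReal ?_
  linarith [mul_le_mul_of_nonneg_left htan (by positivity : 0 ≤ 8 * levelHeight ρ s ^ 2)]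

lemma excessEnergy_add_two_mul_measure {J : Set ℝ} {c c' : ℝ} (hJ : MeasurableSet J) (hc : c ≤ c')
    (hu : ∀ t ∈ J, c' ≤ u t ^ 2) :
    excessEnergy u g ν c' J + 2 * (ENNReal.ofReal (c' - c) * ν J) = excessEnergy u g ν c J := by
  have hsplit : ∫⁻ t in J, ENNReal.ofReal (u t ^ 2 - c) ∂ν =
      (∫⁻ t in J, ENNReal.ofReal (u t ^ 2 - c') ∂ν) + ENNReal.ofReal (c' - c) * ν J := by
    rw [← setLIntegral_const, ← lintegral_add_right _ measurable_const]
    refine setLIntegral_congr_fun hJ fun t ht => ?_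
    rw [← ENNReal.ofReal_add (sub_nonneg.2 (hu t ht)) (sub_nonneg.2 hc)]
    ring_nf
  rw [excessEnergy, excessEnergy, hsplit]
  ring

lemma excessEnergy_iUnion {ι : Type*} [Countable ι] {J : ι → Set ℝ} {c : ℝ}
    (hJ : ∀ i, MeasurableSet (J i)) (hd : Pairwise (Function.onFun Disjoint J)) :
    excessEnergy u g ν c (⋃ i, J i) = ∑' i, excessEnergy u g ν c (J i) := by
  simp only [excessEnergy, lintegral_iUnion hJ hd, ← ENNReal.tsum_mul_left, ENNReal.tsum_add]

lemma lintegral_add_excessEnergy_le {A B : Set ℝ} {c : ℝ} (hB : MeasurableSet B)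
    (hAB : Disjoint A B) :
    (∫⁻ t in A, g t ^ 2) + excessEnergy u g ν c B ≤ excessEnergy u g ν c (A ∪ B) := by
  rw [excessEnergy, excessEnergy, lintegral_union hB hAB, ← add_assoc]
  gcongr
  exact subset_union_right

lemma LevelEstimate.lintegral_Ioo_le (hν : TanGap ν (u ⁻¹' Ioi 0)) (hρ : 1 < ρ) (hs : 0 < s)
    (hest : LevelEstimate u g ν ρ (ρ * s)) {p q : ℝ} (hpq : p < q) (hL : q - p < π)
    (hp : u p ≤ ρ * s) (hq : u q ≤ ρ * s) (hu : Ioo p q ⊆ u ⁻¹' Ioi (ρ * s)) :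
    ∫⁻ t in Ioo p q, levelWeight u ρ (ρ * s) t ≤
      excessEnergy u g ν (levelHeight ρ s ^ 2) (Ioo p q) +
        ENNReal.ofReal (4 * (levelHeight ρ (ρ * s) ^ 2 + levelHeight ρ s ^ 2)) *
          ENNReal.ofReal (tan ((q - p) / 2)) := by
  set W := levelHeight ρ s ^ 2
  set W' := levelHeight ρ (ρ * s) ^ 2
  set T := tan ((q - p) / 2)
  have hs' : 0 < ρ * s := by positivity
  have hWW : W ≤ W' := sq_levelHeight_le_sq_mul hρ hs
  have hT : 0 ≤ T := tan_nonneg_of_nonneg_of_le_pi_div_two (by linarith) (by linarith)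
  have hWu : ∀ t ∈ Ioo p q, W' ≤ u t ^ 2 := fun t ht =>
    pow_le_pow_left₀ (levelHeight_nonneg hρ hs') ((levelHeight_le hρ hs').trans (hu ht).le) 2
  have hgap : ENNReal.ofReal (2 * T) ≤ ν (Ioo p q) :=
    hν hpq hL fun t ht => hs'.trans (hu ht)
  calc ∫⁻ t in Ioo p q, levelWeight u ρ (ρ * s) t
      ≤ excessEnergy u g ν W' (Ioo p q) + ENNReal.ofReal (8 * W' * T) := by
        simpa only [inter_eq_left.2 hu] using hest hpq hL hp hq
    _ = excessEnergy u g ν W' (Ioo p q) +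
          2 * (ENNReal.ofReal (W' - W) * ENNReal.ofReal (2 * T)) +
          ENNReal.ofReal (4 * (W' + W)) * ENNReal.ofReal T := by
        have : 0 ≤ W' - W := sub_nonneg.2 hWW
        rw [add_assoc, ← ENNReal.ofReal_ofNat 2, ← ENNReal.ofReal_mul this,
          ← ENNReal.ofReal_mul zero_le_two, ← ENNReal.ofReal_mul (by positivity),
          ← ENNReal.ofReal_add (by positivity) (by positivity)]
        ring_nf
    _ ≤ excessEnergy u g ν W' (Ioo p q) + 2 * (ENNReal.ofReal (W' - W) * ν (Ioo p q)) +
          ENNReal.ofReal (4 * (W' + W)) * ENNReal.ofReal T := by gcongr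
    _ = _ := by rw [excessEnergy_add_two_mul_measure measurableSet_Ioo hWW hWu]

lemma LevelEstimate.lintegral_superlevel_le (hν : TanGap ν (u ⁻¹' Ioi 0)) (hu : Continuous u)
    (hρ : 1 < ρ) (hs : 0 < s) (hest : LevelEstimate u g ν ρ (ρ * s)) {x y : ℝ} (hL : y - x < π)
    (hx : u x ≤ ρ * s) (hy : u y ≤ ρ * s) :
    ∫⁻ t in Ioo x y ∩ u ⁻¹' Ioi (ρ * s), levelWeight u ρ (ρ * s) t ≤
      excessEnergy u g ν (levelHeight ρ s ^ 2) (Ioo x y ∩ u ⁻¹' Ioi (ρ * s)) +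
        ENNReal.ofReal (4 * (levelHeight ρ (ρ * s) ^ 2 + levelHeight ρ s ^ 2)) *
          ENNReal.ofReal (tan (volume.real (Ioo x y ∩ u ⁻¹' Ioi (ρ * s)) / 2)) := by
  set U := Ioo x y ∩ u ⁻¹' Ioi (ρ * s) with hUdef
  have hU : IsOpen U := isOpen_Ioo.inter (isOpen_Ioi.preimage hu)
  have hUxy : U ⊆ Ioo x y := inter_subset_left
  have hcomponent : ∀ c : componentIntervals U,
      ∫⁻ t in Ioo c.1.1 c.1.2, levelWeight u ρ (ρ * s) t ≤
        excessEnergy u g ν (levelHeight ρ s ^ 2) (Ioo c.1.1 c.1.2) +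
          ENNReal.ofReal (4 * (levelHeight ρ (ρ * s) ^ 2 + levelHeight ρ s ^ 2)) *
            ENNReal.ofReal (tan ((c.1.2 - c.1.1) / 2)) := by
    rintro ⟨⟨p, q⟩, hpq, hsub, hp, hq⟩
    obtain ⟨hxp, hqy⟩ := (Ioo_subset_Ioo_iff hpq).1 (hsub.trans hUxy)
    have hle : ∀ e ∈ Icc x y, e ∉ U → u e ≤ ρ * s := fun e he heU => by
      rcases eq_endpoints_or_mem_Ioo_of_mem_Icc he with rfl | rfl | he'
      · exact hx
      · exact hy
      · exact not_lt.1 fun h => heU ⟨he', h⟩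
    exact hest.lintegral_Ioo_le hν hρ hs hpq (by linarith) (hle p ⟨hxp, hpq.le.trans hqy⟩ hp)
      (hle q ⟨hxp.trans hpq.le, hqy⟩ hq) (hsub.trans inter_subset_right)
  have : Countable (componentIntervals U) := (countable_componentIntervals U).to_subtype
  have hmeas : ∀ c : componentIntervals U, MeasurableSet (Ioo c.1.1 c.1.2) := fun _ =>
    measurableSet_Ioo
  have hdisj := (pairwiseDisjoint_componentIntervals U).subtype
  rw [← iUnion_componentIntervals hU hUxy, lintegral_iUnion hmeas hdisj,
    excessEnergy_iUnion hmeas hdisj, iUnion_componentIntervals hU hUxy]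
  refine (ENNReal.tsum_le_tsum hcomponent).trans ?_
  rw [ENNReal.tsum_add, ENNReal.tsum_mul_left]
  gcongr
  exact tsum_ofReal_tan_componentIntervals_le hU hUxy hL

lemma lintegral_levelWeight_le_add (hu : Continuous u) (hρ : 1 < ρ) (hs : 0 < s) (x y : ℝ) :
    ∫⁻ t in Ioo x y, levelWeight u ρ s t ≤
      (∫⁻ t in Ioo x y ∩ u ⁻¹' Ioi (ρ * s), levelWeight u ρ (ρ * s) t) +
        ENNReal.ofReal (4 * levelHeight ρ s ^ 2) * volume (Ioo x y \ u ⁻¹' Ioi (ρ * s)) := by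
  have hmeas : MeasurableSet (u ⁻¹' Ioi (ρ * s)) := hu.measurable measurableSet_Ioi
  rw [← lintegral_inter_add_sdiff _ (Ioo x y) hmeas, ← setLIntegral_const]
  refine add_le_add (lintegral_mono fun t => ?_) (setLIntegral_mono' ?_ fun t ht => ?_)
  · exact levelWeight_mono hρ hs (le_mul_of_one_le_left hs.le hρ.le) t
  · exact measurableSet_Ioo.diff hmeas
  · exact (levelWeight_of_le hρ (not_lt.1 ht.2)).le

lemma IsUpperGradient.ofReal_mul_ofReal_le_energy (hg : IsUpperGradient u g) (hu : Continuous u)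
    (hρ : 1 < ρ) (hs : 0 < s) {x y z : ℝ} (hz : z ∈ Ioo x y) (hx : u x ≤ s) (hy : u y ≤ s)
    (huz : ρ * s ≤ u z) {T : ℝ} (hT : 0 ≤ T) :
    ENNReal.ofReal (4 * (levelHeight ρ (ρ * s) ^ 2 - levelHeight ρ s ^ 2) * T) ≤
      (∫⁻ t in Ioo x y ∩ u ⁻¹' Ioc s (ρ * s), g t ^ 2) +
        ENNReal.ofReal (4 * levelHeight ρ s ^ 2 * T ^ 2) *
          volume (Ioo x y ∩ u ⁻¹' Ioc s (ρ * s)) := by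
  have hκ : 0 ≤ 2 * levelHeight ρ s * T :=
    mul_nonneg (mul_nonneg zero_le_two (levelHeight_nonneg hρ hs)) hT
  have henergy := hg.four_mul_ofReal_sub_le_energy hu hz (lt_mul_of_one_lt_left hs hρ) hx hy huz
    (ENNReal.ofReal (2 * levelHeight ρ s * T))
  rw [← ENNReal.ofReal_pow hκ, ← ENNReal.ofReal_ofNat 4, ← ENNReal.ofReal_mul (by norm_num),
    ← ENNReal.ofReal_mul (by positivity)] at henergy
  rw [sq_levelHeight_mul_sub_sq hρ]
  convert henergy using 2
  · ring_nf
  · ring_nf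

lemma LevelEstimate.lintegral_superlevel_le_of_crossing (hν : TanGap ν (u ⁻¹' Ioi 0))
    (hg : IsUpperGradient u g) (hu : Continuous u) (hρ : 1 < ρ) (hs : 0 < s)
    (hest : LevelEstimate u g ν ρ (ρ * s)) {x y z : ℝ} (hL : y - x < π) (hx : u x ≤ s)
    (hy : u y ≤ s) (hz : z ∈ Ioo x y) (huz : ρ * s ≤ u z) :
    ∫⁻ t in Ioo x y ∩ u ⁻¹' Ioi (ρ * s), levelWeight u ρ (ρ * s) t ≤
      excessEnergy u g ν (levelHeight ρ s ^ 2) (Ioo x y ∩ u ⁻¹' Ioi s) +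
        (ENNReal.ofReal (8 * levelHeight ρ s ^ 2 *
            tan (volume.real (Ioo x y ∩ u ⁻¹' Ioi (ρ * s)) / 2)) +
          ENNReal.ofReal (4 * levelHeight ρ s ^ 2 *
              tan (volume.real (Ioo x y ∩ u ⁻¹' Ioi (ρ * s)) / 2) ^ 2) *
            volume (Ioo x y \ u ⁻¹' Ioi (ρ * s))) := by
  have hss : s < ρ * s := lt_mul_of_one_lt_left hs hρ
  set W := levelHeight ρ s ^ 2
  set W' := levelHeight ρ (ρ * s) ^ 2
  set S := Ioo x y ∩ u ⁻¹' Ioc s (ρ * s)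
  set U := Ioo x y ∩ u ⁻¹' Ioi (ρ * s)
  set T := tan (volume.real U / 2)
  have hU : MeasurableSet U := measurableSet_Ioo.inter (hu.measurable measurableSet_Ioi)
  have hSU : S ∪ U = Ioo x y ∩ u ⁻¹' Ioi s := by
    rw [← inter_union_distrib_left, ← preimage_union, Ioc_union_Ioi_eq_Ioi hss.le]
  have hdisj : Disjoint S U := Set.disjoint_left.2 fun t ht ht' => ht.2.2.not_gt ht'.2
  have hT : 0 ≤ T := tan_half_measureReal_nonneg inter_subset_left hL
  have hsplit : ENNReal.ofReal (4 * (W' + W)) * ENNReal.ofReal T =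
      ENNReal.ofReal (4 * (W' - W) * T) + ENNReal.ofReal (8 * W * T) := by
    have : 0 ≤ W' - W := sub_nonneg.2 (sq_levelHeight_le_sq_mul hρ hs)
    rw [← ENNReal.ofReal_mul (by positivity), ← ENNReal.ofReal_add (by positivity) (by positivity)]
    ring_nf
  calc ∫⁻ t in U, levelWeight u ρ (ρ * s) t
      ≤ excessEnergy u g ν W U + ENNReal.ofReal (4 * (W' + W)) * ENNReal.ofReal T :=
        hest.lintegral_superlevel_le hν hu hρ hs hL (hx.trans hss.le) (hy.trans hss.le)
    _ ≤ excessEnergy u g ν W U + ((∫⁻ t in S, g t ^ 2) +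
          ENNReal.ofReal (4 * W * T ^ 2) * volume (Ioo x y \ u ⁻¹' Ioi (ρ * s)) +
          ENNReal.ofReal (8 * W * T)) := by
        rw [hsplit]
        gcongr
        refine (hg.ofReal_mul_ofReal_le_energy hu hρ hs hz hx hy huz hT).trans ?_
        gcongr
        exact fun t ht => ⟨ht.1, fun h => ht.2.2.not_gt h⟩
    _ = (∫⁻ t in S, g t ^ 2) + excessEnergy u g ν W U + (ENNReal.ofReal (8 * W * T) +
          ENNReal.ofReal (4 * W * T ^ 2) * volume (Ioo x y \ u ⁻¹' Ioi (ρ * s))) := by ring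
    _ ≤ _ := by
        rw [← hSU]
        gcongr
        exact lintegral_add_excessEnergy_le hU hdisj

lemma LevelEstimate.of_mul (hν : TanGap ν (u ⁻¹' Ioi 0)) (hg : IsUpperGradient u g)
    (hu : Continuous u) (hρ : 1 < ρ) (hs : 0 < s) (hest : LevelEstimate u g ν ρ (ρ * s)) :
    LevelEstimate u g ν ρ s := fun x y hxy hL hx hy => by
  by_cases hz : ∀ t ∈ Ioo x y, u t ≤ ρ * s
  · exact (lintegral_levelWeight_le_of_le hρ hxy hL hz).trans le_add_self
  push Not at hz
  obtain ⟨z, hz, huz⟩ := hz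
  have hU : MeasurableSet (Ioo x y ∩ u ⁻¹' Ioi (ρ * s)) :=
    measurableSet_Ioo.inter (hu.measurable measurableSet_Ioi)
  have htan := ofReal_tan_half_measureReal_add_le hU inter_subset_left hxy hL
    (sq_nonneg (levelHeight ρ s))
  rw [sdiff_self_inter] at htan
  refine (lintegral_levelWeight_le_add hu hρ hs x y).trans ((add_le_add_left
    (hest.lintegral_superlevel_le_of_crossing hν hg hu hρ hs hL hx hy hz huz.le) _).trans ?_)
  rw [add_assoc, add_right_comm]
  gcongr

lemma levelEstimate_of_le {B : ℝ} (hρ : 1 < ρ) (hB : ∀ t, u t ≤ B) (hs : B ≤ ρ * s) :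
    LevelEstimate u g ν ρ s := fun _ _ hxy hL _ _ =>
  (lintegral_levelWeight_le_of_le hρ hxy hL fun t _ => (hB t).trans hs).trans le_add_self

lemma levelEstimate {B : ℝ} (hν : TanGap ν (u ⁻¹' Ioi 0)) (hg : IsUpperGradient u g)
    (hu : Continuous u) (hB : ∀ t, u t ≤ B) (hρ : 1 < ρ) (hs : 0 < s) :
    LevelEstimate u g ν ρ s := by
  have hdescend : ∀ n, LevelEstimate u g ν ρ (ρ ^ n * s) → LevelEstimate u g ν ρ s := by
    intro n
    induction n with
    | zero => simp
    | succ n ih =>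
      intro hest
      rw [pow_succ', mul_assoc] at hest
      exact ih (hest.of_mul hν hg hu hρ (by positivity))
  obtain ⟨n, hn⟩ := pow_unbounded_of_one_lt (B / s) hρ
  exact hdescend n (levelEstimate_of_le hρ hB
    (((div_lt_iff₀ hs).1 hn).le.trans (le_mul_of_one_le_left (by positivity) hρ.le)))

end LevelSets

section VanishingLevel

open scoped Topology

variable {u : ℝ → ℝ} {g : ℝ → ℝ≥0∞} {ν : Measure ℝ}

lemma ofReal_mul_sq_le_levelWeight {ρ s t : ℝ} (hρ : 1 < ρ) (hu : 0 ≤ u t) :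
    ENNReal.ofReal (4 * levelHeight ρ ρ⁻¹ ^ 2) * ENNReal.ofReal (u t ^ 2) ≤
      levelWeight u ρ s t := by
  rw [levelWeight, ← ENNReal.ofReal_mul (by positivity), mul_assoc, ← mul_pow, levelHeight,
    levelHeight, mul_assoc, inv_mul_eq_div]
  gcongr
  exact le_max_right _ _

lemma excessEnergy_le {A B : Set ℝ} {c : ℝ} (hc : 0 ≤ c) (hAB : A ⊆ B) :
    excessEnergy u g ν c A ≤
      (∫⁻ t in B, g t ^ 2) + 2 * ∫⁻ t in B, ENNReal.ofReal (u t ^ 2) ∂ν := by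
  unfold excessEnergy
  gcongr
  exact sub_le_self _ hc

lemma le_mul_of_notMem_Ioo {K : NNReal} (hK : LipschitzWith K u) {a b : ℝ}
    (hout : ∀ t ∉ Ioo a b, u t = 0) {h t : ℝ} (hh : 0 ≤ h) (ht : t ∉ Ioo (a + h) (b - h)) :
    u t ≤ K * h := by
  by_cases htab : t ∈ Ioo a b
  · have hdist : ∀ e ∉ Ioo a b, u t ≤ K * |t - e| := fun e he => by
      simpa [hout e he, Real.dist_eq] using (le_abs_self _).trans (hK.dist_le_mul t e)
    have hnear : |t - a| ≤ h ∨ |t - b| ≤ h := by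
      rw [mem_Ioo, not_and_or, not_lt, not_lt] at ht
      refine ht.imp (fun ht => ?_) fun ht => ?_
      · rw [abs_of_pos (sub_pos.2 htab.1)]
        linarith
      · rw [abs_of_neg (sub_neg.2 htab.2)]
        linarith
    rcases hnear with hnear | hnear
    · exact (hdist a (by simp)).trans (by gcongr)
    · exact (hdist b (by simp)).trans (by gcongr)
  · rw [hout t htab]
    positivity

lemma lintegral_levelWeight_le_add_of_subset {ρ s : ℝ} {A B : Set ℝ} (hρ : 1 < ρ) (hs : 0 < s)
    (hA : MeasurableSet A) (hB : MeasurableSet B) (hAB : A ⊆ B) (hout : ∀ t ∉ A, u t ≤ s) :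
    ∫⁻ t in B, levelWeight u ρ s t ≤
      (∫⁻ t in A, levelWeight u ρ s t) + ENNReal.ofReal (4 * s ^ 2) * volume B := by
  rw [← lintegral_inter_add_sdiff _ B hA, inter_eq_right.2 hAB]
  gcongr
  calc ∫⁻ t in B \ A, levelWeight u ρ s t ≤ ∫⁻ _ in B \ A, ENNReal.ofReal (4 * s ^ 2) :=
        setLIntegral_mono' (hB.diff hA) fun t ht => by
          rw [levelWeight_of_le hρ ((hout t ht.2).trans (le_mul_of_one_le_left hs.le hρ.le))]
          have := levelHeight_nonneg hρ hs
          gcongr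
          exact levelHeight_le hρ hs
    _ ≤ ENNReal.ofReal (4 * s ^ 2) * volume B := by
        rw [setLIntegral_const]
        gcongr
        exact sdiff_subset

lemma sq_levelHeight_mul_tan_le {ρ s h : ℝ} (hρ : 1 < ρ) (hs : 0 < s) (hh : 0 < h)
    (hπ : h < π / 2) : levelHeight ρ s ^ 2 * tan (π / 2 - h) ≤ s ^ 2 * h⁻¹ := by
  have := levelHeight_nonneg hρ hs
  gcongr
  · exact tan_nonneg_of_nonneg_of_le_pi_div_two (by linarith) (by linarith)
  · exact levelHeight_le hρ hs
  · exact tan_pi_div_two_sub_le hh hπ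

lemma lintegral_levelWeight_le {K : NNReal} (hK : LipschitzWith K u)
    (hout : ∀ t ∉ Ioo (-(π / 2)) (π / 2), u t = 0) (hν : TanGap ν (u ⁻¹' Ioi 0))
    (hg : IsUpperGradient u g) {ρ s h : ℝ} (hρ : 1 < ρ) (hs : 0 < s) (hh : 0 < h)
    (hπ : h < π / 2) (hKh : K * h ≤ s) :
    ∫⁻ t in Ioo (-(π / 2)) (π / 2), levelWeight u ρ s t ≤
      (∫⁻ t in Ioo (-(π / 2)) (π / 2), g t ^ 2) +
        2 * (∫⁻ t in Ioo (-(π / 2)) (π / 2), ENNReal.ofReal (u t ^ 2) ∂ν) +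
        ENNReal.ofReal (8 * (s ^ 2 * h⁻¹)) + ENNReal.ofReal (4 * π * s ^ 2) := by
  set x := -(π / 2) + h with hx
  set y := π / 2 - h
  have hxy : Ioo x y ⊆ Ioo (-(π / 2)) (π / 2) := Ioo_subset_Ioo (by linarith) (by linarith)
  have hus : ∀ t ∉ Ioo x y, u t ≤ s := fun t ht =>
    (le_mul_of_notMem_Ioo hK hout hh.le ht).trans hKh
  have huB : ∀ t, u t ≤ K * π := fun t =>
    le_mul_of_notMem_Ioo hK hout pi_pos.le fun ht => by linarith [ht.1.trans ht.2, pi_pos]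
  have htan : 8 * levelHeight ρ s ^ 2 * tan ((y - x) / 2) ≤ 8 * (s ^ 2 * h⁻¹) := by
    rw [show (y - x) / 2 = π / 2 - h by ring]
    linarith [sq_levelHeight_mul_tan_le hρ hs hh hπ]
  have hest := levelEstimate hν hg hK.continuous huB hρ hs (x := x) (y := y) (by linarith)
    (by linarith) (hus x (by simp)) (hus y (by simp))
  refine (lintegral_levelWeight_le_add_of_subset hρ hs measurableSet_Ioo measurableSet_Ioo hxy
    hus).trans (add_le_add (hest.trans (add_le_add (excessEnergy_le (sq_nonneg _)
      (inter_subset_left.trans hxy)) (ENNReal.ofReal_le_ofReal htan))) (le_of_eq ?_))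
  rw [Real.volume_Ioo, ← ENNReal.ofReal_mul (by positivity)]
  ring_nf

lemma ofReal_mul_lintegral_sq_le_add {K : NNReal} (hK : LipschitzWith K u) (hu : ∀ t, 0 ≤ u t)
    (hout : ∀ t ∉ Ioo (-(π / 2)) (π / 2), u t = 0) (hν : TanGap ν (u ⁻¹' Ioi 0))
    (hg : IsUpperGradient u g) {s : ℝ} (hs : 0 < s) (hs1 : s < 1) :
    ENNReal.ofReal (4 * levelHeight (1 + s) (1 + s)⁻¹ ^ 2) *
        ∫⁻ t in Ioo (-(π / 2)) (π / 2), ENNReal.ofReal (u t ^ 2) ≤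
      (∫⁻ t in Ioo (-(π / 2)) (π / 2), g t ^ 2) +
        2 * (∫⁻ t in Ioo (-(π / 2)) (π / 2), ENNReal.ofReal (u t ^ 2) ∂ν) +
        ENNReal.ofReal (8 * (K + 1) * s + 4 * π * s ^ 2) := by
  have hρ : 1 < 1 + s := lt_add_of_pos_right 1 hs
  have hKh : K * (s / (K + 1)) ≤ s := by
    rw [mul_div_left_comm]
    exact mul_le_of_le_one_right hs.le
      ((div_le_one (by positivity)).2 (le_add_of_nonneg_right zero_le_one))
  have hπ : s / (K + 1) < π / 2 := by
    have : s / (K + 1) ≤ s := div_le_self hs.le (le_add_of_nonneg_left K.2)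
    linarith [pi_gt_three]
  have hsh : 8 * (s ^ 2 * (s / (K + 1))⁻¹) = 8 * (K + 1) * s := by
    rw [inv_div]
    field_simp
  rw [← lintegral_const_mul' _ _ ENNReal.ofReal_ne_top,
    ENNReal.ofReal_add (by positivity) (by positivity), ← hsh, ← add_assoc]
  exact (lintegral_mono fun t => ofReal_mul_sq_le_levelWeight hρ (hu t)).trans
    (lintegral_levelWeight_le hK hout hν hg hρ hs (by positivity) hπ hKh)

lemma four_mul_lintegral_sq_le {K : NNReal} (hK : LipschitzWith K u) (hu : ∀ t, 0 ≤ u t)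
    (hout : ∀ t ∉ Ioo (-(π / 2)) (π / 2), u t = 0) (hν : TanGap ν (u ⁻¹' Ioi 0))
    (hg : IsUpperGradient u g) :
    4 * ∫⁻ t in Ioo (-(π / 2)) (π / 2), ENNReal.ofReal (u t ^ 2) ≤
      (∫⁻ t in Ioo (-(π / 2)) (π / 2), g t ^ 2) +
        2 * ∫⁻ t in Ioo (-(π / 2)) (π / 2), ENNReal.ofReal (u t ^ 2) ∂ν := by
  set A := ∫⁻ t in Ioo (-(π / 2)) (π / 2), ENNReal.ofReal (u t ^ 2)
  set E := (∫⁻ t in Ioo (-(π / 2)) (π / 2), g t ^ 2) +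
    2 * ∫⁻ t in Ioo (-(π / 2)) (π / 2), ENNReal.ofReal (u t ^ 2) ∂ν
  have hleft : Tendsto (fun s => ENNReal.ofReal (4 * levelHeight (1 + s) (1 + s)⁻¹ ^ 2) * A)
      (𝓝[>] 0) (𝓝 (4 * A)) := by
    have hcont : ContinuousAt (fun s : ℝ => 4 * levelHeight (1 + s) (1 + s)⁻¹ ^ 2) 0 := by
      unfold levelHeight
      fun_prop (disch := norm_num)
    have hlim := ENNReal.tendsto_ofReal (hcont.tendsto.mono_left (nhdsWithin_le_nhds (s := Ioi 0)))
    rw [show 4 * levelHeight (1 + 0) (1 + 0)⁻¹ ^ 2 = 4 by norm_num [levelHeight],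
      ENNReal.ofReal_ofNat] at hlim
    exact ENNReal.Tendsto.mul_const hlim (Or.inl (by norm_num))
  have hright : Tendsto (fun s => E + ENNReal.ofReal (8 * (K + 1) * s + 4 * π * s ^ 2))
      (𝓝[>] 0) (𝓝 E) := by
    have hcont : Continuous fun s : ℝ => 8 * (K + 1) * s + 4 * π * s ^ 2 := by fun_prop
    have hlim := ENNReal.tendsto_ofReal
      ((hcont.tendsto 0).mono_left (nhdsWithin_le_nhds (s := Ioi 0)))
    simpa using tendsto_const_nhds.add hlim
  refine le_of_tendsto_of_tendsto hleft hright ?_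
  filter_upwards [Ioo_mem_nhdsGT one_pos] with s hs
  exact ofReal_mul_lintegral_sq_le_add hK hu hout hν hg hs.1 hs.2

end VanishingLevel

section LowerBound

open scoped Topology

variable {v : ℝ → ℝ} {ν : Measure ℝ}

lemma TestFun.exists_lipschitzWith {a b : ℝ} (hv : TestFun a b v) :
    ∃ K : NNReal, LipschitzWith K v :=
  ContDiff.lipschitzWith_of_hasCompactSupport
    (HasCompactSupport.intro isCompact_Icc fun x hx =>
      hv.2 x (notMem_subset Ioo_subset_Icc_self hx))
    hv.1 one_ne_zero

lemma four_mul_lintegral_sq_le_of_testFun (hv : TestFun (-(π / 2)) (π / 2) v)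
    (hν : TanGap ν (Function.support v)) :
    4 * ∫⁻ t in Ioo (-(π / 2)) (π / 2), ENNReal.ofReal (v t ^ 2) ≤
      (∫⁻ t in Ioo (-(π / 2)) (π / 2), ENNReal.ofReal (deriv v t ^ 2)) +
        2 * ∫⁻ t in Ioo (-(π / 2)) (π / 2), ENNReal.ofReal (v t ^ 2) ∂ν := by
  obtain ⟨K, hK⟩ := hv.exists_lipschitzWith
  have hsupp : (fun t => |v t|) ⁻¹' Ioi 0 = Function.support v := by
    ext t
    simp
  have hderiv : ∀ t, ‖deriv v t‖ₑ ^ 2 = ENNReal.ofReal (deriv v t ^ 2) := fun t => by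
    rw [enorm_eq_ofReal_abs, ← ENNReal.ofReal_pow (abs_nonneg _), sq_abs]
  have hLip : LipschitzWith (1 * K) fun t => |v t| := lipschitzWith_one_norm.comp hK
  simpa only [sq_abs, hderiv] using four_mul_lintegral_sq_le hLip (fun t => abs_nonneg (v t))
    (fun t ht => abs_eq_zero.2 (hv.2 t ht)) (hsupp.symm ▸ hν) (isUpperGradient_abs hv.1)

lemma subset_of_isOpen_of_ordConnected {U s : Set ℝ} (hU : IsOpen U) (hs : s.OrdConnected)
    (hnull : volume (U \ s) = 0) : U ⊆ s := by
  intro t ht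
  obtain ⟨ε, hε, hball⟩ := Metric.isOpen_iff.1 hU t ht
  rw [Real.ball_eq_Ioo] at hball
  have hmeets : ∀ a b, a < b → Ioo a b ⊆ U → (Ioo a b ∩ s).Nonempty := fun a b hab hsub => by
    by_contra hdisj
    have hvol := measure_mono_null (subset_sdiff.2 ⟨hsub, disjoint_iff_inter_eq_empty.2
      (not_nonempty_iff_eq_empty.1 hdisj)⟩) hnull
    exact (hab.trans_le (by simpa using hvol)).false
  obtain ⟨c, hct, hc⟩ := hmeets (t - ε) t (by linarith)
    ((Ioo_subset_Ioo_right (by linarith)).trans hball)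
  obtain ⟨d, htd, hd⟩ := hmeets t (t + ε) (by linarith)
    ((Ioo_subset_Ioo_left (by linarith)).trans hball)
  exact hs.out hc hd ⟨hct.2.le, htd.1.le⟩

lemma TanGap.mono {A B : Set ℝ} (hν : TanGap ν B) (hAB : A ⊆ B) : TanGap ν A :=
  fun _ _ hpq hπ hsub => hν hpq hπ (hsub.trans hAB)

namespace PsiA

variable (P : PsiA)

lemma nu_le_derivM {A : Set ℝ} (hA : A ⊆ P.dom) : P.nu A ≤ P.derivM A := by
  rw [derivM, Measure.add_apply, Measure.restrict_eq_self _ hA]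
  exact le_self_add

lemma tanGap_derivM : TanGap P.derivM P.dom := by
  intro p q hpq hπ hsub
  refine le_trans ?_ (P.nu_le_derivM hsub)
  have hcos : cos ((q - 0 - (p + 0)) / 2) ≠ 0 :=
    (cos_pos_of_mem_Ioo ⟨by linarith [pi_pos], by linarith⟩).ne'
  have hcont : ContinuousAt (fun ε => 2 * tan ((q - ε - (p + ε)) / 2)) 0 :=
    continuousAt_const.mul (ContinuousAt.comp' (f := fun ε => (q - ε - (p + ε)) / 2)
      (continuousAt_tan.2 hcos) (by fun_prop))
  have hlim := ENNReal.tendsto_ofReal (hcont.tendsto.mono_left (nhdsWithin_le_nhds (s := Ioi 0)))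
  rw [sub_zero, add_zero] at hlim
  refine le_of_tendsto hlim ?_
  filter_upwards [Ioo_mem_nhdsGT (half_pos (sub_pos.2 hpq))] with ε hε
  have hp : p + ε ∈ P.dom := hsub ⟨by linarith [hε.1], by linarith [hε.2]⟩
  have hq : q - ε ∈ P.dom := hsub ⟨by linarith [hε.2], by linarith [hε.1]⟩
  have hlt : p + ε < q - ε := by linarith [hε.2]
  calc ENNReal.ofReal (2 * tan ((q - ε - (p + ε)) / 2))
      ≤ ENNReal.ofReal (P.psi (q - ε) - P.psi (p + ε)) :=
        ENNReal.ofReal_le_ofReal (P.gap hp hq hlt)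
    _ = P.nu (Ioc (p + ε) (q - ε)) := (P.nu_eq hp hq hlt.le).symm
    _ ≤ P.nu (Ioo p q) := measure_mono fun t ht =>
        ⟨by linarith [ht.1, hε.1], by linarith [ht.2, hε.1]⟩

lemma lintegral_sdiff_dom_eq_zero {f : ℝ → ℝ≥0∞}
    (hfin : ∫⁻ t in Ioo (-(π / 2)) (π / 2), f t ∂P.derivM ≠ ∞) :
    ∫⁻ t in Ioo (-(π / 2)) (π / 2) \ P.dom, f t = 0 := by
  by_contra hne
  refine hfin (top_unique ?_)
  calc ∞ = ∞ * ∫⁻ t in Ioo (-(π / 2)) (π / 2) \ P.dom, f t := (ENNReal.top_mul hne).symm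
    _ ≤ ∫⁻ t in Ioo (-(π / 2)) (π / 2), f t ∂P.derivM := by
        rw [derivM, Measure.restrict_add, lintegral_add_measure, Measure.restrict_smul,
          lintegral_smul_measure, Measure.restrict_restrict (t := _ \ _) measurableSet_Ioo,
          inter_eq_right.2 sdiff_subset, smul_eq_mul]
        exact le_add_self

lemma support_subset_dom (hv : Continuous v) (hout : ∀ t ∉ Ioo (-(π / 2)) (π / 2), v t = 0)
    (hfin : ∫⁻ t in Ioo (-(π / 2)) (π / 2), ENNReal.ofReal (v t ^ 2) ∂P.derivM ≠ ∞) :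
    Function.support v ⊆ P.dom := by
  refine subset_of_isOpen_of_ordConnected hv.isOpen_support P.domConn ?_
  have hae := (lintegral_eq_zero_iff (by fun_prop)).1 (P.lintegral_sdiff_dom_eq_zero hfin)
  rw [EventuallyEq, ae_restrict_iff' (measurableSet_Ioo.diff P.domConn.measurableSet)] at hae
  refine measure_mono_null (fun t ht => ?_) (ae_iff.1 hae)
  have htI : t ∈ Ioo (-(π / 2)) (π / 2) := by_contra fun h => ht.1 (hout t h)
  exact fun h => (sq_pos_of_ne_zero ht.1).not_ge (ENNReal.ofReal_eq_zero.1 (h ⟨htI, ht.2⟩))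

theorem four_le_lam1 : 4 ≤ lam1 (-(π / 2)) (π / 2) ((2 : ℝ≥0∞) • P.derivM) := by
  refine le_iInf₂ fun v ⟨hv, hmass⟩ => ?_
  have hmass_fin : ∫⁻ t in Ioo (-(π / 2)) (π / 2), ENNReal.ofReal (v t ^ 2) ≠ ∞ :=
    (((hv.1.continuous.pow 2).integrableOn_Icc).mono_set Ioo_subset_Icc_self).lintegral_lt_top.ne
  rw [dirRQ, ENNReal.le_div_iff_mul_le (Or.inl hmass) (Or.inl hmass_fin), Measure.restrict_smul,
    lintegral_smul_measure, smul_eq_mul]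
  by_cases hfin : ∫⁻ t in Ioo (-(π / 2)) (π / 2), ENNReal.ofReal (v t ^ 2) ∂P.derivM = ∞
  · simp [hfin]
  · exact four_mul_lintegral_sq_le_of_testFun hv
      (P.tanGap_derivM.mono (P.support_subset_dom hv.1.continuous hv.2 hfin))

end PsiA

end LowerBound

section CosSq

open scoped Topology

lemma hasDerivAt_indicator {s : Set ℝ} {f f' : ℝ → ℝ} (hf : ∀ x, HasDerivAt f (f' x) x)
    (h0 : ∀ x ∈ frontier s, f x = 0) (h1 : ∀ x ∈ frontier s, f' x = 0) (x : ℝ) :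
    HasDerivAt (s.indicator f) (s.indicator f' x) x := by
  by_cases hx : x ∈ frontier s
  · have hval : ∀ g : ℝ → ℝ, g x = 0 → s.indicator g x = 0 := fun g hg => by
      simp [indicator, hg]
    rw [hval f' (h1 x hx), hasDerivAt_iff_isLittleO, hval f (h0 x hx)]
    have hlittle := (hasDerivAt_iff_isLittleO.1 (hf x))
    simp only [h0 x hx, h1 x hx, sub_zero, smul_zero] at hlittle ⊢
    exact (Asymptotics.isBigO_of_le _ fun y => norm_indicator_le_norm_self f y).trans_isLittleO
      hlittle
  · rw [frontier, Set.mem_sdiff, not_and_or, not_not, ← mem_compl_iff, ← interior_compl] at hx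
    rcases hx with hx | hx
    · have hout : s.indicator f =ᶠ[𝓝 x] fun _ => 0 := by
        filter_upwards [mem_interior_iff_mem_nhds.1 hx] with y hy using indicator_of_notMem hy f
      rw [indicator_of_notMem (interior_subset hx)]
      exact (hasDerivAt_const x 0).congr_of_eventuallyEq hout
    · have hin : s.indicator f =ᶠ[𝓝 x] f := by
        filter_upwards [mem_interior_iff_mem_nhds.1 hx] with y hy using indicator_of_mem hy f
      rw [indicator_of_mem (interior_subset hx)]
      exact (hf x).congr_of_eventuallyEq hin

lemma contDiff_one_indicator {s : Set ℝ} {f f' : ℝ → ℝ} (hf : ∀ x, HasDerivAt f (f' x) x)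
    (hf' : Continuous f') (h0 : ∀ x ∈ frontier s, f x = 0) (h1 : ∀ x ∈ frontier s, f' x = 0) :
    ContDiff ℝ 1 (s.indicator f) := by
  have hderiv := hasDerivAt_indicator hf h0 h1
  rw [contDiff_one_iff_deriv, funext fun x => (hderiv x).deriv]
  exact ⟨fun x => (hderiv x).differentiableAt, continuous_indicator h1 hf'.continuousOn⟩

lemma cosSq_eq_indicator :
    cosSq = (Ioo (-(π / 2)) (π / 2)).indicator fun x => cos x ^ 2 := by
  ext x
  simp only [cosSq, indicator_apply]

lemma hasDerivAt_cos_sq (x : ℝ) : HasDerivAt (fun x => cos x ^ 2) (-(2 * sin x * cos x)) x :=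
  ((hasDerivAt_cos x).pow 2).congr_deriv (by push_cast; ring)

lemma cos_eq_zero_of_mem_frontier {x : ℝ} (hx : x ∈ frontier (Ioo (-(π / 2)) (π / 2))) :
    cos x = 0 := by
  rw [frontier_Ioo (by linarith [pi_pos])] at hx
  rcases hx with rfl | rfl <;> simp

lemma hasDerivAt_cosSq {x : ℝ} (hx : x ∈ Ioo (-(π / 2)) (π / 2)) :
    HasDerivAt cosSq (-(2 * sin x * cos x)) x := by
  refine (hasDerivAt_cos_sq x).congr_of_eventuallyEq ?_
  filter_upwards [isOpen_Ioo.mem_nhds hx] with y hy using if_pos hy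

lemma testFun_cosSq : TestFun (-(π / 2)) (π / 2) cosSq := by
  refine ⟨?_, fun x hx => if_neg hx⟩
  rw [cosSq_eq_indicator]
  refine contDiff_one_indicator hasDerivAt_cos_sq (by fun_prop) (fun x hx => ?_) fun x hx => ?_
  all_goals simp [cos_eq_zero_of_mem_frontier hx]

end CosSq

section TanPotential

lemma restrict_Ioo_eq_of_Ioc {μ ν : Measure ℝ} {a b : ℝ}
    (hfin : ∀ c ∈ Ioo a b, ∀ d ∈ Ioo a b, c ≤ d → μ (Ioc c d) ≠ ∞)
    (heq : ∀ c ∈ Ioo a b, ∀ d ∈ Ioo a b, c ≤ d → μ (Ioc c d) = ν (Ioc c d)) :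
    μ.restrict (Ioo a b) = ν.restrict (Ioo a b) := by
  rcases le_or_gt b a with hab | hab
  · simp [Ioo_eq_empty hab.not_gt]
  obtain ⟨x, -, hx, hxlim⟩ := exists_seq_strictAnti_tendsto' hab
  obtain ⟨y, -, hy, hylim⟩ := exists_seq_strictMono_tendsto' hab
  have hUnion : Ioo a b = ⋃ n, Ioc (x n) (y n) := by
    refine Subset.antisymm (fun t ht => ?_) (iUnion_subset fun n t ht =>
      ⟨(hx n).1.trans ht.1, ht.2.trans_lt (hy n).2⟩)
    obtain ⟨n, hxn, hyn⟩ :=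
      ((hxlim.eventually_lt_const ht.1).and (hylim.eventually_const_le ht.2)).exists
    exact mem_iUnion_of_mem n ⟨hxn, hyn⟩
  rw [hUnion, Measure.restrict_iUnion_congr]
  intro n
  rcases lt_or_ge (y n) (x n) with hyx | hxy
  · simp [Ioc_eq_empty hyx.not_gt]
  have : IsFiniteMeasure (μ.restrict (Ioc (x n) (y n))) :=
    isFiniteMeasure_restrict.2 (hfin _ (hx n) _ (hy n) hxy)
  refine Measure.ext_of_Ioc _ _ fun c d _ => ?_
  rw [Measure.restrict_apply measurableSet_Ioc, Measure.restrict_apply measurableSet_Ioc,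
    Ioc_inter_Ioc]
  rcases le_or_gt (c ⊔ x n) (d ⊓ y n) with hle | hlt
  · exact heq _ ⟨(hx n).1.trans_le le_sup_right, (hle.trans inf_le_right).trans_lt (hy n).2⟩ _
      ⟨(hx n).1.trans_le (le_sup_right.trans hle), inf_le_right.trans_lt (hy n).2⟩ hle
  · simp only [Ioc_eq_empty hlt.not_gt, measure_empty]

lemma lintegral_inv_cos_sq {c d : ℝ} (hc : -(π / 2) < c) (hd : d < π / 2) (hcd : c ≤ d) :
    ∫⁻ x in Ioc c d, ENNReal.ofReal (1 / cos x ^ 2) = ENNReal.ofReal (tan d - tan c) := by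
  have hcos : ∀ x ∈ uIcc c d, cos x ≠ 0 := fun x hx => by
    rw [uIcc_of_le hcd] at hx
    exact (cos_pos_of_mem_Ioo ⟨hc.trans_le hx.1, hx.2.trans_lt hd⟩).ne'
  have hint : IntervalIntegrable (fun x => 1 / cos x ^ 2) volume c d :=
    (continuousOn_const.div (by fun_prop) fun x hx =>
      pow_ne_zero 2 (hcos x hx)).intervalIntegrable
  rw [← intervalIntegral.integral_eq_sub_of_hasDerivAt
      (fun x hx => hasDerivAt_tan (hcos x hx)) hint,
    intervalIntegral.integral_of_le hcd, ofReal_integral_eq_lintegral_ofReal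
      ((intervalIntegrable_iff_integrableOn_Ioc_of_le hcd).1 hint)
      (Eventually.of_forall fun x => by positivity)]

namespace PsiA

variable {P : PsiA}

lemma restrict_nu_eq_withDensity (hdom : P.dom = Ioo (-(π / 2)) (π / 2))
    (hpsi : ∀ x ∈ P.dom, P.psi x = tan x) :
    P.nu.restrict (Ioo (-(π / 2)) (π / 2)) =
      (volume.withDensity fun x => ENNReal.ofReal (1 / cos x ^ 2)).restrict
        (Ioo (-(π / 2)) (π / 2)) := by
  have hnu : ∀ c ∈ Ioo (-(π / 2)) (π / 2), ∀ d ∈ Ioo (-(π / 2)) (π / 2), c ≤ d →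
      P.nu (Ioc c d) = ENNReal.ofReal (tan d - tan c) := by
    rw [← hdom]
    intro c hc d hd hcd
    rw [P.nu_eq hc hd hcd, hpsi c hc, hpsi d hd]
  refine restrict_Ioo_eq_of_Ioc (fun c hc d hd hcd => ?_) fun c hc d hd hcd => ?_
  · rw [hnu c hc d hd hcd]
    exact ENNReal.ofReal_ne_top
  · rw [hnu c hc d hd hcd, withDensity_apply _ measurableSet_Ioc,
      lintegral_inv_cos_sq hc.1 hd.2 hcd]

lemma lintegral_cosSq_sq_derivM (hdom : P.dom = Ioo (-(π / 2)) (π / 2))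
    (hpsi : ∀ x ∈ P.dom, P.psi x = tan x) :
    ∫⁻ x in Ioo (-(π / 2)) (π / 2), ENNReal.ofReal (cosSq x ^ 2) ∂P.derivM =
      ∫⁻ x in Ioo (-(π / 2)) (π / 2), ENNReal.ofReal (cos x ^ 2) := by
  have hderivM : P.derivM = P.nu.restrict (Ioo (-(π / 2)) (π / 2)) := by
    rw [derivM, hdom, sdiff_self, Measure.restrict_empty, smul_zero, add_zero]
  have hmeas : Measurable cosSq := testFun_cosSq.1.continuous.measurable
  rw [hderivM, Measure.restrict_restrict measurableSet_Ioo, inter_self,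
    restrict_nu_eq_withDensity hdom hpsi, restrict_withDensity measurableSet_Ioo,
    lintegral_withDensity_eq_lintegral_mul _ (by fun_prop) (by fun_prop)]
  refine setLIntegral_congr_fun measurableSet_Ioo fun x hx => ?_
  have hcos : cos x ≠ 0 := (cos_pos_of_mem_Ioo hx).ne'
  simp only [Pi.mul_apply, cosSq, if_pos hx]
  rw [← ENNReal.ofReal_mul (by positivity)]
  field_simp

end PsiA

lemma setLIntegral_Ioo_ofReal_eq {f : ℝ → ℝ} {a b : ℝ} (hf : Continuous f) (h0 : ∀ x, 0 ≤ f x)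
    (hab : a ≤ b) :
    ∫⁻ x in Ioo a b, ENNReal.ofReal (f x) = ENNReal.ofReal (∫ x in a..b, f x) := by
  rw [intervalIntegral.integral_of_le hab, integral_Ioc_eq_integral_Ioo]
  exact (ofReal_integral_eq_lintegral_ofReal (hf.integrableOn_Icc.mono_set Ioo_subset_Icc_self)
    (Eventually.of_forall h0)).symm

lemma integral_cos_pow_two : ∫ x in (-(π / 2))..(π / 2), cos x ^ 2 = π / 2 := by
  rw [integral_cos_sq]
  simp

lemma integral_cos_pow_four : ∫ x in (-(π / 2))..(π / 2), cos x ^ 4 = 3 * π / 8 := by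
  rw [integral_cos_pow 2, integral_cos_pow_two]
  simp
  ring

lemma integral_deriv_cos_sq_sq :
    ∫ x in (-(π / 2))..(π / 2), (-(2 * sin x * cos x)) ^ 2 = π / 2 := by
  have hexpand : ∀ x : ℝ, (-(2 * sin x * cos x)) ^ 2 = 4 * cos x ^ 2 - 4 * cos x ^ 4 := fun x => by
    linear_combination 4 * cos x ^ 2 * sin_sq x
  simp only [hexpand]
  rw [intervalIntegral.integral_sub (Continuous.intervalIntegrable (by fun_prop) _ _)
    (Continuous.intervalIntegrable (by fun_prop) _ _),
    intervalIntegral.integral_const_mul, intervalIntegral.integral_const_mul,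
    integral_cos_pow_two, integral_cos_pow_four]
  ring

lemma lintegral_cosSq_sq :
    ∫⁻ x in Ioo (-(π / 2)) (π / 2), ENNReal.ofReal (cosSq x ^ 2) =
      ENNReal.ofReal (3 * π / 8) := by
  rw [← integral_cos_pow_four, ← setLIntegral_Ioo_ofReal_eq (by fun_prop)
    (fun x => by positivity) (by linarith [pi_pos])]
  refine setLIntegral_congr_fun measurableSet_Ioo fun x hx => ?_
  simp only [cosSq, if_pos hx]
  ring_nf

lemma lintegral_deriv_cosSq_sq :
    ∫⁻ x in Ioo (-(π / 2)) (π / 2), ENNReal.ofReal (deriv cosSq x ^ 2) =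
      ENNReal.ofReal (π / 2) := by
  calc ∫⁻ x in Ioo (-(π / 2)) (π / 2), ENNReal.ofReal (deriv cosSq x ^ 2)
      = ∫⁻ x in Ioo (-(π / 2)) (π / 2), ENNReal.ofReal ((-(2 * sin x * cos x)) ^ 2) :=
        setLIntegral_congr_fun measurableSet_Ioo fun x hx => by
          simp only [(hasDerivAt_cosSq hx).deriv]
    _ = ENNReal.ofReal (π / 2) := by
        rw [setLIntegral_Ioo_ofReal_eq (by fun_prop) (fun x => sq_nonneg _)
          (by linarith [pi_pos]), integral_deriv_cos_sq_sq]

theorem PsiA.dirRQ_cosSq {P : PsiA} (hdom : P.dom = Ioo (-(π / 2)) (π / 2))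
    (hpsi : ∀ x ∈ P.dom, P.psi x = tan x) :
    dirRQ (-(π / 2)) (π / 2) ((2 : ℝ≥0∞) • P.derivM) cosSq = 4 := by
  have hmass : (0 : ℝ) < 3 * π / 8 := by positivity
  rw [dirRQ, Measure.restrict_smul, lintegral_smul_measure, smul_eq_mul,
    lintegral_cosSq_sq_derivM hdom hpsi, lintegral_deriv_cosSq_sq, lintegral_cosSq_sq,
    setLIntegral_Ioo_ofReal_eq (by fun_prop) (fun x => sq_nonneg _) (by linarith [pi_pos]),
    integral_cos_pow_two, ← ENNReal.ofReal_ofNat 2, ← ENNReal.ofReal_ofNat 4,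
    ← ENNReal.ofReal_mul (by norm_num), ← ENNReal.ofReal_add (by positivity) (by positivity),
    ← ENNReal.ofReal_div_of_pos hmass]
  congr 1
  field_simp
  norm_num

end TanPotential

/-- Proposition 2.4 / `p:seconda`: for every `ψ ∈ 𝒜(I_π)` it holds
`λ₁(I_π, 2ψ') ≥ 4`; in particular, equality occurs if `ψ(x) = tan x`, and in that case
an eigenfunction is `cos² x`. -/
theorem lower_bound_two_psi_deriv (P : PsiA) :
    4 ≤ lam1 (-(π / 2)) (π / 2) ((2 : ℝ≥0∞) • P.derivM) ∧
    ((P.dom = Ioo (-(π / 2)) (π / 2) ∧ ∀ x ∈ P.dom, P.psi x = tan x) →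
      lam1 (-(π / 2)) (π / 2) ((2 : ℝ≥0∞) • P.derivM) = 4 ∧
      dirRQ (-(π / 2)) (π / 2) ((2 : ℝ≥0∞) • P.derivM) cosSq = 4) := by
  refine ⟨P.four_le_lam1, ?_⟩
  rintro ⟨hdom, hpsi⟩
  have hRQ := PsiA.dirRQ_cosSq hdom hpsi
  have hmass : ∫⁻ x in Ioo (-(π / 2)) (π / 2), ENNReal.ofReal (cosSq x ^ 2) ≠ 0 := by
    rw [lintegral_cosSq_sq]
    exact (ENNReal.ofReal_pos.2 (by positivity)).ne'
  exact ⟨le_antisymm (hRQ ▸ iInf₂_le cosSq ⟨testFun_cosSq, hmass⟩) P.four_le_lam1, hRQ⟩
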